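/- arXiv:2105.00165 — 2 statements merged into one kernel-verified Lean document; each statement's English description precedes it below -/
import Mathlib

section
/- Let n ≥ 1 and let A be an n×n real matrix with entries in {0,1}, interpreted as the adjacency matrix of a directed graph on vertices {1,…,n} with an edge from i to j whenever A_{ij} = 1. Let D be the diagonal matrix with D_{ii} = Σ_j A_{ij} and let L = D − A be the graph Laplacian. If the digraph is strongly connected, i.e. for every pair of distinct vertices i, j there is a directed path from i to j (the transitive closure of the edge relation relates every ordered pair of distinct vertices), then 0 is a simple eigenvalue of L: 0 is a root of the characteristic polynomial of L of multiplicity exactly 1. -/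
lemma lap_mulVec {n : ℕ} (A : Matrix (Fin n) (Fin n) ℝ) (x : Fin n → ℝ) (i : Fin n) :
    ((Matrix.diagonal (fun i => ∑ j, A i j) - A).mulVec x) i = ∑ j, A i j * (x i - x j) := by
  rw [Matrix.sub_mulVec, Pi.sub_apply, Matrix.mulVec_diagonal]
  simp only [Matrix.mulVec, dotProduct, mul_sub, Finset.sum_sub_distrib, Finset.sum_mul]

lemma lap_const {n : ℕ} (hn : 1 ≤ n) (A : Matrix (Fin n) (Fin n) ℝ)
    (hA01 : ∀ i j, A i j = 0 ∨ A i j = 1)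
    (hconn : ∀ i j : Fin n, i ≠ j →
      Relation.TransGen (fun a b : Fin n => A a b = 1) i j)
    (x : Fin n → ℝ) (c : ℝ) (h : ∀ i, ∑ j, A i j * (x i - x j) = c) :
    ∃ d, ∀ i, x i = d := by
  have hne : Nonempty (Fin n) := ⟨⟨0, hn⟩⟩
  have hA : ∀ i j, 0 ≤ A i j := fun i j => by rcases hA01 i j with h | h <;> simp [h]
  obtain ⟨m, hm⟩ := Finite.exists_max x
  obtain ⟨l, hl⟩ := Finite.exists_min x
  have h1 : 0 ≤ c := by
    rw [← h m]
    exact Finset.sum_nonneg fun j _ => mul_nonneg (hA m j) (sub_nonneg.2 (hm j))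
  have h2 : c ≤ 0 := by
    rw [← h l]
    exact Finset.sum_nonpos fun j _ =>
      mul_nonpos_of_nonneg_of_nonpos (hA l j) (sub_nonpos.2 (hl j))
  have hc : c = 0 := le_antisymm h2 h1
  have step : ∀ a b, A a b = 1 → x a = x m → x b = x m := by
    intro a b hab ha
    have h3 := h a
    rw [hc, Finset.sum_eq_zero_iff_of_nonneg
      (fun j _ => mul_nonneg (hA a j) (sub_nonneg.2 (ha ▸ hm j)))] at h3
    have h4 := h3 b (Finset.mem_univ b)
    rw [hab] at h4
    linarith
  refine ⟨x m, fun i => ?_⟩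
  by_cases hi : m = i
  · rw [hi]
  · have ht := hconn m i hi
    clear hi
    induction ht with
    | single hab => exact step _ _ hab rfl
    | tail _ hab ih => exact step _ _ hab ih

/-- For a directed graph on `n ≥ 1` vertices given by a 0-1 adjacency matrix `A`
(edge `i → j` iff `A i j = 1`), with Laplacian `L = D - A` where `D` is the diagonal
matrix of row sums, strong connectedness implies that `0` is a simple eigenvalue of `L`,
i.e. a root of the characteristic polynomial of multiplicity exactly one. -/
theorem laplacian_zero_is_simple_eigenvalue
    (n : ℕ) (hn : 1 ≤ n) (A : Matrix (Fin n) (Fin n) ℝ)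
    (hA01 : ∀ i j, A i j = 0 ∨ A i j = 1)
    (hconn : ∀ i j : Fin n, i ≠ j →
      Relation.TransGen (fun a b : Fin n => A a b = 1) i j) :
    ((Matrix.diagonal (fun i => ∑ j, A i j) - A).charpoly).rootMultiplicity 0 = 1 := by
  classical
  set L := Matrix.diagonal (fun i => ∑ j, A i j) - A with hL
  have hne : Nonempty (Fin n) := ⟨⟨0, hn⟩⟩
  have hpow : ∀ k : ℕ, ∀ x : Fin n → ℝ, ((Matrix.toLin' L) ^ k) x = 0 → ∃ d, ∀ i, x i = d := by
    intro k
    induction k with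
    | zero => intro x hx; exact ⟨0, fun i => by simpa using congrFun hx i⟩
    | succ k ih =>
      intro x hx
      rw [pow_succ, Module.End.mul_apply] at hx
      obtain ⟨d, hd⟩ := ih _ hx
      refine lap_const hn A hA01 hconn x d fun i => ?_
      rw [← lap_mulVec, ← hd i, Matrix.toLin'_apply]
  have hE : Module.End.maxGenEigenspace (Matrix.toLin' L) 0 = ℝ ∙ (fun _ : Fin n => (1 : ℝ)) := by
    ext x
    rw [Module.End.mem_maxGenEigenspace, Submodule.mem_span_singleton]
    simp only [zero_smul, sub_zero]
    constructor
    · rintro ⟨k, hk⟩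
      obtain ⟨d, hd⟩ := hpow k x hk
      exact ⟨d, by ext i; simp [hd i]⟩
    · rintro ⟨d, rfl⟩
      refine ⟨1, ?_⟩
      ext i
      rw [pow_one, Matrix.toLin'_apply, lap_mulVec]
      simp
  rw [← Matrix.charpoly_toLin', ← LinearMap.finrank_maxGenEigenspace_eq, hE]
  refine finrank_span_singleton fun h => ?_
  simpa using congrFun h ⟨0, hn⟩
end

section
/- Let μ > 0 be a real number and m ≥ 1, and consider the 2m×2m real block matrix A = [[0, μ I_m], [−I_m, −I_m]], where I_m is the m×m identity matrix. Then there exists a 2m×2m real symmetric positive definite matrix P such that P A + Aᵀ P is negative definite. -/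
open Matrix

lemma quad_block (m : ℕ) (a b d : ℝ) (z : (Fin m ⊕ Fin m) → ℝ) :
    z ⬝ᵥ (Matrix.fromBlocks (a • (1 : Matrix (Fin m) (Fin m) ℝ)) (b • 1) (b • 1) (d • 1)).mulVec z
      = ∑ i, (a * z (Sum.inl i) ^ 2 + 2 * b * (z (Sum.inl i) * z (Sum.inr i))
          + d * z (Sum.inr i) ^ 2) := by
  rw [Matrix.fromBlocks_mulVec]
  simp only [dotProduct, Fintype.sum_sum_type, Sum.elim_inl, Sum.elim_inr, Matrix.smul_mulVec,
    Matrix.one_mulVec, Pi.add_apply, Pi.smul_apply, Function.comp_apply, smul_eq_mul]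
  rw [← Finset.sum_add_distrib]
  exact Finset.sum_congr rfl fun i _ => by ring

lemma quad_block_pos (m : ℕ) (a b d : ℝ)
    (h : ∀ x y : ℝ, (x ≠ 0 ∨ y ≠ 0) → 0 < a * x ^ 2 + 2 * b * (x * y) + d * y ^ 2)
    (z : (Fin m ⊕ Fin m) → ℝ) (hz : z ≠ 0) :
    0 < ∑ i, (a * z (Sum.inl i) ^ 2 + 2 * b * (z (Sum.inl i) * z (Sum.inr i))
          + d * z (Sum.inr i) ^ 2) := by
  apply Finset.sum_pos'
  · intro i _
    by_cases h0 : z (Sum.inl i) ≠ 0 ∨ z (Sum.inr i) ≠ 0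
    · exact (h _ _ h0).le
    · push Not at h0
      simp [h0.1, h0.2]
  · obtain ⟨j, hj⟩ := Function.ne_iff.mp hz
    rcases j with i | i
    · exact ⟨i, Finset.mem_univ _, h _ _ (Or.inl hj)⟩
    · exact ⟨i, Finset.mem_univ _, h _ _ (Or.inr hj)⟩

/-- For `μ > 0` and `m ≥ 1`, there is a symmetric positive definite `P` with
`P A + Aᵀ P` negative definite, where `A = [[0, μ I], [−I, −I]]` is the `2m × 2m` real
block matrix. -/
theorem exists_lyapunov_matrix_block
    (μ : ℝ) (hμ : 0 < μ) (m : ℕ) (hm : 1 ≤ m) :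
    ∃ P : Matrix (Fin m ⊕ Fin m) (Fin m ⊕ Fin m) ℝ,
      P.IsSymm ∧
      (∀ z : (Fin m ⊕ Fin m) → ℝ, z ≠ 0 → 0 < z ⬝ᵥ P.mulVec z) ∧
      (∀ z : (Fin m ⊕ Fin m) → ℝ, z ≠ 0 →
        z ⬝ᵥ (P * Matrix.fromBlocks (0 : Matrix (Fin m) (Fin m) ℝ) (μ • 1) (-1) (-1) +
              (Matrix.fromBlocks (0 : Matrix (Fin m) (Fin m) ℝ) (μ • 1) (-1) (-1))ᵀ *
                P).mulVec z < 0) := by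
  refine ⟨Matrix.fromBlocks ((μ + 2) • (1 : Matrix (Fin m) (Fin m) ℝ)) (μ • 1) (μ • 1)
    ((μ * (μ + 1)) • 1), ?_, ?_, ?_⟩
  · simp [Matrix.IsSymm, Matrix.fromBlocks_transpose]
  · intro z hz
    rw [quad_block]
    refine quad_block_pos m _ _ _ ?_ z hz
    intro x y hxy
    have e : (μ + 2) * x ^ 2 + 2 * μ * (x * y) + μ * (μ + 1) * y ^ 2
        = 2 * x ^ 2 + μ * (x + y) ^ 2 + μ ^ 2 * y ^ 2 := by ring
    rw [e]
    rcases hxy with h | h <;> positivity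
  · intro z hz
    have e : (Matrix.fromBlocks ((μ + 2) • (1 : Matrix (Fin m) (Fin m) ℝ)) (μ • (1 : Matrix (Fin m) (Fin m) ℝ)) (μ • (1 : Matrix (Fin m) (Fin m) ℝ))
        ((μ * (μ + 1)) • (1 : Matrix (Fin m) (Fin m) ℝ))) *
          Matrix.fromBlocks (0 : Matrix (Fin m) (Fin m) ℝ) (μ • (1 : Matrix (Fin m) (Fin m) ℝ)) (-1 : Matrix (Fin m) (Fin m) ℝ)
            (-1 : Matrix (Fin m) (Fin m) ℝ) +
        (Matrix.fromBlocks (0 : Matrix (Fin m) (Fin m) ℝ) (μ • (1 : Matrix (Fin m) (Fin m) ℝ)) (-1 : Matrix (Fin m) (Fin m) ℝ)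
            (-1 : Matrix (Fin m) (Fin m) ℝ))ᵀ *
          (Matrix.fromBlocks ((μ + 2) • (1 : Matrix (Fin m) (Fin m) ℝ)) (μ • (1 : Matrix (Fin m) (Fin m) ℝ)) (μ • (1 : Matrix (Fin m) (Fin m) ℝ))
        ((μ * (μ + 1)) • (1 : Matrix (Fin m) (Fin m) ℝ)))
        = -Matrix.fromBlocks ((2 * μ) • (1 : Matrix (Fin m) (Fin m) ℝ)) ((0 : ℝ) • (1 : Matrix (Fin m) (Fin m) ℝ))
            ((0 : ℝ) • (1 : Matrix (Fin m) (Fin m) ℝ)) ((2 * μ) • (1 : Matrix (Fin m) (Fin m) ℝ)) := by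
      rw [Matrix.fromBlocks_transpose, Matrix.fromBlocks_multiply, Matrix.fromBlocks_multiply,
        Matrix.fromBlocks_add, Matrix.fromBlocks_neg]
      simp only [Matrix.transpose_zero, Matrix.transpose_smul, Matrix.transpose_one,
        Matrix.transpose_neg, Matrix.mul_zero, Matrix.zero_mul, Matrix.mul_neg, Matrix.neg_mul,
        Matrix.mul_one, Matrix.one_mul, Matrix.smul_mul, Matrix.mul_smul]
      congr 1 <;> module
    rw [e, Matrix.neg_mulVec, dotProduct_neg, quad_block, neg_lt_zero]
    refine quad_block_pos m _ _ _ ?_ z hz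
    intro x y hxy
    have e : 2 * μ * x ^ 2 + 2 * 0 * (x * y) + 2 * μ * y ^ 2
        = 2 * μ * x ^ 2 + 2 * μ * y ^ 2 := by ring
    rw [e]
    rcases hxy with h | h <;> positivity
end
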